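/- (Self-adaptive CPO is balanced.) Let β > 0 and P_w, P_l > 0 be real numbers, and set the stop-gradient coefficient β_w = β·P_w/P_l, treated as a constant. Let d_w be the derivative at P_w of P ↦ −log σ(β_w·log P − β·log P_l), and let d_l be the derivative at P_l of P ↦ −log σ(β_w·log P_w − β·log P). Then |d_w| = |d_l|. -/

import Mathlib

/-! By the chain rule both derivatives are the common factor `(−log σ)′(t)`, at the same point
`t = β_w log P_w − β log P_l`, times an inner derivative: `β_w / P_w` for the preferred response
and `−β / P_l` for the dispreferred one. Since `β_w = β P_w / P_l`, these differ only in sign. -/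

/-- The logistic sigmoid σ(t) = 1/(1 + exp(−t)). -/
noncomputable def sigmoid (t : ℝ) : ℝ := 1 / (1 + Real.exp (-t))

/-- The loss `t ↦ −log σ(t) = log (1 + exp (−t))` has derivative `−(1 − σ(t))`, written here
as a quotient of exponentials. -/
theorem hasDerivAt_neg_log_sigmoid (t : ℝ) :
    HasDerivAt (fun t : ℝ => -Real.log (sigmoid t))
      (-Real.exp (-t) / (1 + Real.exp (-t))) t := by
  have h : (fun t : ℝ => -Real.log (sigmoid t)) = fun t => Real.log (1 + Real.exp (-t)) := by
    funext s
    simp [sigmoid, Real.log_inv]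
  rw [h]
  have hpos : 1 + Real.exp (-t) ≠ 0 := by positivity
  simpa using (((hasDerivAt_id t).neg.exp).const_add 1).log hpos

/-- Self-adaptive CPO is balanced: with the stop-gradient
coefficient `β_w = β·P_w/P_l` treated as a constant, the CPO contrastive loss
has `|d_w| = |d_l|`. -/
theorem adaptive_cpo_balanced (β Pw Pl βw : ℝ) (hβ : 0 < β)
    (hPw : 0 < Pw) (hPl : 0 < Pl) (hβw : βw = β * Pw / Pl) :
    |deriv (fun P : ℝ => -Real.log (sigmoid (βw * Real.log P - β * Real.log Pl))) Pw| =
    |deriv (fun P : ℝ => -Real.log (sigmoid (βw * Real.log Pw - β * Real.log P))) Pl| := by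
  have hc := hasDerivAt_neg_log_sigmoid (βw * Real.log Pw - β * Real.log Pl)
  have hw := hc.comp Pw
    (((Real.hasDerivAt_log hPw.ne').const_mul βw).sub_const (β * Real.log Pl))
  have hl := hc.comp Pl
    (((Real.hasDerivAt_log hPl.ne').const_mul β).const_sub (βw * Real.log Pw))
  -- The inner derivatives `β_w / P_w` and `-β / P_l` are opposite by the choice of `β_w`.
  have key : βw * Pw⁻¹ = β * Pl⁻¹ := by
    rw [hβw]
    field_simp
  erw [hw.deriv, hl.deriv]
  rw [key, mul_neg, abs_neg]
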